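/- Suppose f, g : ℝ^N → (−∞, ∞] are Borel measurable, m_f := inf f and m_g := inf g are finite, and m_f + m_g ≥ 0. Set m_{f,g} := (m_f − m_g)/2. Then f − m_{f,g}, g + m_{f,g} and f□g are nonnegative, f□g is Lebesgue measurable, and for every Young function φ: ‖(f − m_{f,g})⁻¹‖_φ + ‖(g + m_{f,g})⁻¹‖_φ ≤ 4 ‖(f□g)⁻¹‖_φ. -/

import Mathlib

open MeasureTheory Filter Set
open scoped ENNReal NNReal Pointwise

noncomputable section

/-- `ℝ^N` with the Euclidean structure and Lebesgue measure. -/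
abbrev ES (N : ℕ) := EuclideanSpace ℝ (Fin N)

variable {N : ℕ}

/-- The operation `(f ⊼ g)(x) = sup_y min (f (x - y)) (g y)` for extended-real valued
functions. -/
def supMinE (f g : ES N → EReal) (x : ES N) : EReal := ⨆ y, min (f (x - y)) (g y)

/-- The operation `(f ⊻ g)(x) = inf_y max (f (x - y)) (g y)` for extended-real valued
functions. -/
def infMaxE (f g : ES N → EReal) (x : ES N) : EReal := ⨅ y, max (f (x - y)) (g y)

/-- The infimal convolution `(f □ g)(x) = inf_y (f (x - y) + g y)`. -/
def infConvE (f g : ES N → EReal) (x : ES N) : EReal := ⨅ y, (f (x - y) + g y)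

/-- The operation `(f ⊼ g)(x) = sup_y min (f (x - y)) (g y)` for `[0,∞]`-valued functions. -/
def supMin (f g : ES N → ℝ≥0∞) (x : ES N) : ℝ≥0∞ := ⨆ y, min (f (x - y)) (g y)

/-- A Young function: a nonconstant, nondecreasing, convex, left-continuous
`φ : [0,∞] → [0,∞]` with `φ 0 = 0`. -/
structure IsYoungFunction (φ : ℝ≥0∞ → ℝ≥0∞) : Prop where
  nonconstant : ∃ x y, φ x ≠ φ y
  map_zero : φ 0 = 0
  mono : Monotone φ
  convex : ∀ ⦃a b x y : ℝ≥0∞⦄, a + b = 1 → φ (a * x + b * y) ≤ a * φ x + b * φ y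
  left_continuous : ∀ x, ContinuousWithinAt φ (Set.Iio x) x

/-- The Luxemburg norm `‖h‖_φ = inf {r > 0 | ∫ φ (r⁻¹ |h|) ≤ 1}` (`= ∞` if no such `r`),
for a nonnegative function `h`. -/
def luxNorm (φ : ℝ≥0∞ → ℝ≥0∞) (h : ES N → ℝ≥0∞) : ℝ≥0∞ :=
  sInf {r : ℝ≥0∞ | 0 < r ∧ ∫⁻ x, φ (r⁻¹ * h x) ≤ 1}

/-- The nonnegative part of an extended real, as an element of `[0,∞]`. -/
def toENN (a : EReal) : ℝ≥0∞ := if a = ⊤ then ⊤ else ENNReal.ofReal a.toReal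

/-- The reciprocal `1/a ∈ [0,∞]` of an extended real (intended for `a ≥ 0`), with the
conventions `1/0 = ∞` and `1/∞ = 0`. -/
def eInv (a : EReal) : ℝ≥0∞ := (toENN a)⁻¹

/-- The enclosing radius of a set `X ⊆ ℝ^N`: the infimum of the radii of closed balls
containing `X` (`0` for `X = ∅`, `∞` if `X` is unbounded). -/
def encRadius (X : Set (ES N)) : ℝ≥0∞ := sInf {r : ℝ≥0∞ | ∃ c : ES N, ∀ x ∈ X, edist x c ≤ r}

/-- The transform `f̂(x) = γ_f^+(|x|)` where `γ_f^+(t) = inf {ξ | ρ_f^+(ξ) ≤ t}` and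
`ρ_f^+(ξ)` is the enclosing radius of the upper level set `{f > ξ}`. -/
def hatE (f : ES N → EReal) (x : ES N) : EReal :=
  sInf {ξ : EReal | encRadius {y | ξ < f y} ≤ (‖x‖₊ : ℝ≥0∞)}

/-- The lower transform `f̌ = -((-f)^)`. -/
def checkE (f : ES N → EReal) (x : ES N) : EReal := - hatE (fun y => - f y) x

/-- The transform `f̂` for `[0,∞]`-valued functions. -/
def hatT (f : ES N → ℝ≥0∞) (x : ES N) : ℝ≥0∞ :=
  sInf {ξ : ℝ≥0∞ | encRadius {y | ξ < f y} ≤ (‖x‖₊ : ℝ≥0∞)}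

/-- The lower transform `f̌(x) = γ_f^-(|x|)`, `γ_f^-(t) = sup {ξ | ρ({f < ξ}) ≤ t}`,
for `[0,∞]`-valued functions. -/
def checkT (f : ES N → ℝ≥0∞) (x : ES N) : ℝ≥0∞ :=
  sSup {ξ : ℝ≥0∞ | encRadius {y | f y < ξ} ≤ (‖x‖₊ : ℝ≥0∞)}

/-- The `L^p` "norm" (`p ∈ [1,∞]`, essential supremum when `p = ∞`) of a `[0,∞]`-valued
function. -/
def pNorm (p : ℝ≥0∞) (h : ES N → ℝ≥0∞) : ℝ≥0∞ :=
  if p = ∞ then essSup h volume else (∫⁻ x, h x ^ p.toReal) ^ (1 / p.toReal)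

/-!
The measurability of `f □ g` holds because its strict sublevel sets are projections of Borel sets,
hence analytic, hence universally measurable: a continuous image of the Baire space is exhausted in
measure by the images of the compact boxes `{z | ∀ i, z i ≤ k i}`.

For the norm bound, put `F = f - m_{f,g}` and `G = g + m_{f,g}`: then `F □ G = f □ g` and
`inf F = inf G`. If `{F < t}` is nonempty, so is `{G < t}`, and `{F □ G < 2t}` contains the sumset
`{F < t} + {G < t}`, hence a translate of `{F < t}`. So the distribution function of `F⁻¹` is
dominated by that of `2 (F □ G)⁻¹`, and by the layer cake formula `‖F⁻¹‖_φ ≤ 2 ‖(F □ G)⁻¹‖_φ`. By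
symmetry the same bound holds for `G⁻¹`, and `2 + 2 = 4`.
-/

section AnalyticSets

variable {α β : Type*}

theorem exists_forall_lt_eq_imp_mem_of_isCompact {X : ℕ → Type*} [∀ i, TopologicalSpace (X i)]
    {K V : Set (∀ i, X i)} (hK : IsCompact K) (hV : IsOpen V) (hKV : K ⊆ V) :
    ∃ n, ∀ x ∈ K, ∀ z, (∀ i < n, z i = x i) → z ∈ V := by
  refine hK.induction_on (p := fun s => ∃ n, ∀ x ∈ s, ∀ z, (∀ i < n, z i = x i) → z ∈ V)
    ⟨0, by simp⟩ ?_ ?_ fun x hx => ?_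
  · rintro s t hst ⟨n, hn⟩
    exact ⟨n, fun x hx => hn x (hst hx)⟩
  · rintro s t ⟨n, hn⟩ ⟨n', hn'⟩
    refine ⟨max n n', ?_⟩
    rintro x (hx | hx) z hz
    · exact hn x hx z fun i hi => hz i (lt_max_of_lt_left hi)
    · exact hn' x hx z fun i hi => hz i (lt_max_of_lt_right hi)
  · obtain ⟨I, u, hu, hIV⟩ := isOpen_pi_iff.1 hV x (hKV hx)
    have hmem : (I : Set ℕ).pi u ∈ nhds x :=
      set_pi_mem_nhds I.finite_toSet fun i hi => (hu i hi).1.mem_nhds (hu i hi).2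
    obtain ⟨n, hn⟩ := I.exists_nat_subset_range
    refine ⟨_, mem_nhdsWithin_of_mem_nhds hmem, n, fun y hy z hz => hIV fun i hi => ?_⟩
    rw [hz i (Finset.mem_range.1 (hn hi))]
    exact hy i hi

variable [MeasurableSpace α] {μ : Measure α} {r : ℝ≥0∞}

theorem exists_lt_measure_image_inter_preimage_Iic {h : β → α} {S : Set β}
    (hr : r < μ (h '' S)) (p : β → ℕ) : ∃ m, r < μ (h '' (S ∩ p ⁻¹' Iic m)) := by
  have hmono : Monotone fun m => h '' (S ∩ p ⁻¹' Iic m) := fun m m' hm =>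
    image_mono (inter_subset_inter_right _ (preimage_mono (Iic_subset_Iic.2 hm)))
  have hS : h '' S = ⋃ m, h '' (S ∩ p ⁻¹' Iic m) := by
    rw [← image_iUnion, ← inter_iUnion, ← preimage_iUnion, iUnion_Iic, preimage_univ, inter_univ]
  rw [hS, hmono.measure_iUnion] at hr
  exact lt_iSup_iff.1 hr

theorem exists_forall_lt_measure_image_forall_lt_le {h : β → α} (hr : r < μ (range h))
    (p : ℕ → β → ℕ) : ∃ k : ℕ → ℕ, ∀ n, r < μ (h '' {z | ∀ i < n, p i z ≤ k i}) := by
  choose m hm using fun (n : ℕ) (S : {S : Set β // r < μ (h '' S)}) =>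
    exists_lt_measure_image_inter_preimage_Iic S.2 (p n)
  let S : ℕ → {S : Set β // r < μ (h '' S)} := fun n =>
    Nat.rec ⟨univ, by rwa [image_univ]⟩ (fun n S => ⟨S.1 ∩ p n ⁻¹' Iic (m n S), hm n S⟩) n
  have hS : ∀ n, (S n).1 = {z | ∀ i < n, p i z ≤ m i (S i)} := by
    intro n
    induction n with
    | zero => simp [S]
    | succ n ih =>
      change (S n).1 ∩ p n ⁻¹' Iic (m n (S n)) = _
      ext z
      simp only [ih, Nat.forall_lt_succ_right, mem_inter_iff, mem_ofPred_eq, mem_preimage, mem_Iic]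
  exact ⟨fun n => m n (S n), fun n => hS n ▸ (S n).2⟩

theorem exists_isCompact_subset_range_le_measure [TopologicalSpace α] [μ.OuterRegular]
    {h : (ℕ → ℕ) → α} (hc : Continuous h) (hr : r < μ (range h)) :
    ∃ K ⊆ range h, IsCompact K ∧ r ≤ μ K := by
  obtain ⟨k, hk⟩ := exists_forall_lt_measure_image_forall_lt_le hr fun i z => z i
  have hbox : IsCompact (univ.pi fun i => Iic (k i)) :=
    isCompact_univ_pi fun i => (finite_Iic (k i)).isCompact
  refine ⟨_, image_subset_range h _, hbox.image hc, ?_⟩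
  by_contra! hlt
  obtain ⟨U, hKU, hUo, hUr⟩ := exists_isOpen_lt_of_lt _ _ hlt
  obtain ⟨n, hn⟩ := exists_forall_lt_eq_imp_mem_of_isCompact hbox (hUo.preimage hc)
    (image_subset_iff.1 hKU)
  have hsub : h '' {z | ∀ i < n, z i ≤ k i} ⊆ U := by
    rintro _ ⟨z, hz, rfl⟩
    exact hn (fun i => min (z i) (k i)) (fun i _ => mem_Iic.2 (min_le_right _ _)) z
      fun i hi => (min_eq_left (hz i hi)).symm
  exact ((hk n).trans_le (measure_mono hsub)).not_gt hUr

theorem nullMeasurableSet_of_forall_lt_exists_subset {s : Set α} (hs : μ s ≠ ∞)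
    (h : ∀ r < μ s, ∃ t ⊆ s, MeasurableSet t ∧ r ≤ μ t) : NullMeasurableSet s μ := by
  obtain h0 | h0 := eq_zero_or_pos (μ s)
  · exact .of_null h0
  obtain ⟨u, -, hu, hlim⟩ := exists_seq_strictMono_tendsto' h0
  choose t hts ht hut using fun n => h (u n) (hu n).2
  have hT : NullMeasurableSet (⋃ n, t n) μ := .iUnion fun n => (ht n).nullMeasurableSet
  have hle : μ s ≤ μ (⋃ n, t n) :=
    le_of_tendsto' hlim fun n => (hut n).trans (measure_mono (subset_iUnion _ _))
  exact hT.congr (ae_eq_of_subset_of_measure_ge (iUnion_subset hts) hle hT hs)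

theorem nullMeasurableSet_of_analyticSet [TopologicalSpace α]
    [TopologicalSpace.MetrizableSpace α] [BorelSpace α] [SFinite μ] {s : Set α}
    (hs : AnalyticSet s) : NullMeasurableSet s μ := by
  refine NullMeasurableSet.mono_ac ?_ (absolutelyContinuous_toFinite μ)
  rw [AnalyticSet] at hs
  obtain rfl | ⟨h, hc, rfl⟩ := hs
  · exact .empty
  refine nullMeasurableSet_of_forall_lt_exists_subset (measure_ne_top _ _) fun r hr => ?_
  obtain ⟨K, hKs, hK, hrK⟩ := exists_isCompact_subset_range_le_measure hc hr
  exact ⟨K, hKs, hK.measurableSet, hrK⟩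

theorem aemeasurable_iInf_of_measurable_uncurry {R : Type*} [StandardBorelSpace α]
    [MeasurableSpace β] [StandardBorelSpace β] [SFinite μ] [CompleteLinearOrder R]
    [TopologicalSpace R] [OrderTopology R] [SecondCountableTopology R] [MeasurableSpace R]
    [BorelSpace R] {F : α → β → R} (hF : Measurable (Function.uncurry F)) :
    AEMeasurable (fun x => ⨅ y, F x y) μ := by
  let := upgradeStandardBorel α
  refine NullMeasurable.aemeasurable
    (measurable_of_Iio (mδ := NullMeasurableSpace.instMeasurableSpace) fun t => ?_)
  have himg : (fun x => ⨅ y, F x y) ⁻¹' Iio t = Prod.fst '' (Function.uncurry F ⁻¹' Iio t) := by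
    ext x
    simp [iInf_lt_iff]
  have hproj : NullMeasurableSet (Prod.fst '' (Function.uncurry F ⁻¹' Iio t)) μ :=
    nullMeasurableSet_of_analyticSet ((hF measurableSet_Iio).analyticSet_image measurable_fst)
  exact himg ▸ hproj

end AnalyticSets

section LayerCake

variable {α β : Type*} [MeasurableSpace α] [MeasurableSpace β] {μ : Measure α} {ν : Measure β}
  {p : α → ℝ≥0∞} {q : β → ℝ≥0∞}

theorem lintegral_eq_lintegral_measure_ofReal_lt (hp : AEMeasurable p μ) :
    ∫⁻ x, p x ∂μ = ∫⁻ t in Ioi (0 : ℝ), μ {x | ENNReal.ofReal t < p x} := by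
  by_cases htop : μ {x | p x = ∞} = 0
  · have hfin : ∀ᵐ x ∂μ, p x ≠ ∞ := by simpa [ae_iff] using htop
    calc ∫⁻ x, p x ∂μ
        = ∫⁻ x, ENNReal.ofReal (p x).toReal ∂μ :=
          lintegral_congr_ae (hfin.mono fun x hx => (ENNReal.ofReal_toReal hx).symm)
      _ = ∫⁻ t in Ioi (0 : ℝ), μ {x | t < (p x).toReal} :=
          lintegral_eq_lintegral_meas_lt μ (.of_forall fun x => ENNReal.toReal_nonneg)
            hp.ennreal_toReal
      _ = _ := by
          refine setLIntegral_congr_fun measurableSet_Ioi fun t ht => measure_congr ?_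
          filter_upwards [hfin] with x hx
          exact propext (ENNReal.ofReal_lt_iff_lt_toReal (mem_Ioi.1 ht).le hx).symm
  · rw [not_imp_comm.1 (measure_eq_top_of_lintegral_ne_top hp) htop, eq_comm, eq_top_iff]
    calc ∞ = ∫⁻ _ in Ioi (0 : ℝ), μ {x | p x = ∞} := by
          rw [setLIntegral_const, Real.volume_Ioi, ENNReal.mul_top htop]
      _ ≤ _ := lintegral_mono fun t => measure_mono fun x (hx : p x = ∞) =>
          mem_ofPred.2 (hx ▸ ENNReal.ofReal_lt_top)

theorem lintegral_le_lintegral_of_measure_lt_le (hp : AEMeasurable p μ) (hq : AEMeasurable q ν)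
    (h : ∀ t, μ {x | t < p x} ≤ ν {y | t < q y}) : ∫⁻ x, p x ∂μ ≤ ∫⁻ y, q y ∂ν := by
  rw [lintegral_eq_lintegral_measure_ofReal_lt hp, lintegral_eq_lintegral_measure_ofReal_lt hq]
  exact lintegral_mono fun t => h _

end LayerCake

section LuxemburgNorm

theorem exists_forall_lt_apply_iff_lt {α β : Type*} [CompleteLinearOrder α] [DenselyOrdered α]
    [TopologicalSpace α] [OrderTopology α] [LinearOrder β] [TopologicalSpace β]
    [OrderClosedTopology β] {φ : α → β} (hmono : Monotone φ)
    (hleft : ∀ x, ContinuousWithinAt φ (Iio x) x) {τ : β} (hτ : φ ⊥ ≤ τ) :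
    ∃ s, ∀ w, τ < φ w ↔ s < w := by
  refine ⟨sInf {w | τ < φ w}, fun w => ⟨fun hw => ?_, fun hw => ?_⟩⟩
  · have hw0 : ⊥ < w := hmono.reflect_lt (hτ.trans_lt hw)
    have : (nhdsWithin w (Iio w)).NeBot := nhdsLT_neBot_of_exists_lt ⟨⊥, hw0⟩
    obtain ⟨v, hv, hvw⟩ := (((hleft w).eventually_const_lt hw).and self_mem_nhdsWithin).exists
    exact lt_of_le_of_lt (sInf_le (mem_ofPred.2 hv)) hvw
  · obtain ⟨v, hv, hvw⟩ := sInf_lt_iff.1 hw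
    exact (mem_ofPred.1 hv).trans_le (hmono hvw.le)

variable {φ : ℝ≥0∞ → ℝ≥0∞} {p q : ES N → ℝ≥0∞} {c : ℝ≥0∞}

theorem luxNorm_le_of_volume_lt_le (hφ : IsYoungFunction φ) (hp : AEMeasurable p)
    (hq : AEMeasurable q) (h : ∀ s, volume {x | s < p x} ≤ volume {x | s < q x}) :
    luxNorm φ p ≤ luxNorm φ q := by
  refine sInf_le_sInf fun r ⟨hr0, hr⟩ => ⟨hr0, le_trans ?_ hr⟩
  obtain rfl | hrt := eq_or_ne r ∞
  · simp
  have hmeas : ∀ {u : ES N → ℝ≥0∞}, AEMeasurable u → AEMeasurable fun x => φ (r⁻¹ * u x) :=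
    fun hu => hφ.mono.measurable.comp_aemeasurable (hu.const_mul _)
  refine lintegral_le_lintegral_of_measure_lt_le (hmeas hp) (hmeas hq) fun τ => ?_
  obtain ⟨s, hs⟩ := exists_forall_lt_apply_iff_lt hφ.mono hφ.left_continuous
    (hφ.map_zero.trans_le (zero_le : 0 ≤ τ))
  have hlevel : ∀ w, τ < φ (r⁻¹ * w) ↔ s * r < w := fun w => by
    rw [hs, mul_comm, ← div_eq_mul_inv, ENNReal.lt_div_iff_mul_lt (.inl hr0.ne') (.inl hrt)]
  simpa only [hlevel] using h (s * r)

theorem luxNorm_const_mul_le (h0 : c ≠ 0) (hc : c ≠ ∞) :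
    luxNorm φ (fun x => c * q x) ≤ c * luxNorm φ q := by
  simp only [luxNorm, sInf_eq_iInf, ENNReal.mul_iInf_of_ne h0 hc]
  refine le_iInf₂ fun r ⟨hr0, hr⟩ => iInf₂_le (c * r) ⟨ENNReal.mul_pos h0 hr0.ne', ?_⟩
  have hcancel : ∀ w, (c * r)⁻¹ * (c * w) = r⁻¹ * w := fun w => by
    rw [ENNReal.mul_inv (.inl h0) (.inl hc), mul_mul_mul_comm, ENNReal.inv_mul_cancel h0 hc,
      one_mul]
  simpa only [hcancel] using hr

theorem luxNorm_inv_le_mul_of_volume_lt_le (hφ : IsYoungFunction φ) (h0 : c ≠ 0) (hc : c ≠ ∞)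
    (hp : AEMeasurable p) (hq : AEMeasurable q)
    (h : ∀ t, volume {x | p x < t} ≤ volume {x | q x < c * t}) :
    luxNorm φ (fun x => (p x)⁻¹) ≤ c * luxNorm φ (fun x => (q x)⁻¹) := by
  refine (luxNorm_le_of_volume_lt_le hφ hp.inv (hq.inv.const_mul c) fun s => ?_).trans
    (luxNorm_const_mul_le h0 hc)
  have hlevel : ∀ w : ℝ≥0∞, s < c * w⁻¹ ↔ w < c * s⁻¹ := fun w => by
    rw [← div_eq_mul_inv, ← ENNReal.inv_div (.inl hc) (.inl h0), ENNReal.lt_inv_iff_lt_inv,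
      ENNReal.div_lt_iff (.inl h0) (.inl hc), mul_comm]
  simpa only [Pi.inv_apply, ENNReal.lt_inv_iff_lt_inv, hlevel] using h s⁻¹

end LuxemburgNorm

section InfimalConvolution

theorem iInf_add_coe {ι : Sort*} (u : ι → EReal) (m : ℝ) :
    ⨅ i, (u i + (m : EReal)) = (⨅ i, u i) + m :=
  eq_of_forall_le_iff fun c => by
    simp only [le_iInf_iff, ← EReal.sub_le_iff_le_add (.inl (EReal.coe_ne_bot m))
      (.inl (EReal.coe_ne_top m))]

theorem toENNReal_lt_iff_of_ne_zero {u : EReal} {t : ℝ≥0∞} (ht : t ≠ 0) :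
    u.toENNReal < t ↔ u < t := by
  obtain hu | hu := le_total u 0
  · simpa [EReal.toENNReal_of_nonpos hu, pos_iff_ne_zero, ht] using
      hu.trans_lt (EReal.coe_ennreal_pos.2 (pos_iff_ne_zero.2 ht))
  · rw [← EReal.coe_ennreal_lt_coe_ennreal_iff, EReal.coe_toENNReal hu]

theorem eInv_eq_inv_toENNReal (u : EReal) : eInv u = u.toENNReal⁻¹ :=
  rfl

theorem measure_le_measure_add_of_nonempty {G : Type*} [AddGroup G] [MeasurableSpace G]
    [MeasurableAdd G] (μ : Measure G) [μ.IsAddRightInvariant] (S : Set G) {T : Set G}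
    (hT : T.Nonempty) : μ S ≤ μ (S + T) := by
  obtain ⟨y, hy⟩ := hT
  rw [← measure_preimage_add_right μ y (S + T)]
  exact measure_mono fun x hx => add_mem_add hx hy

variable {f g : ES N → EReal}

theorem infConvE_comm (f g : ES N → EReal) : infConvE f g = infConvE g f := by
  funext x
  refine (Equiv.subLeft x).iInf_congr fun y => ?_
  simp [add_comm]

theorem infConvE_sub_coe_add_coe (f g : ES N → EReal) (m : ℝ) :
    infConvE (fun x => f x - m) (fun x => g x + m) = infConvE f g := by
  funext x
  refine iInf_congr fun y => ?_
  change (f (x - y) - m) + (g y + m) = f (x - y) + g y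
  rw [add_comm (g y), ← add_assoc, EReal.sub_add_cancel]

theorem infConvE_nonneg (hf : ∀ x, 0 ≤ f x) (hg : ∀ x, 0 ≤ g x) (x : ES N) :
    0 ≤ infConvE f g x :=
  le_iInf fun _ => add_nonneg (hf _) (hg _)

theorem aemeasurable_infConvE (hf : Measurable f) (hg : Measurable g) {μ : Measure (ES N)}
    [SFinite μ] : AEMeasurable (infConvE f g) μ :=
  aemeasurable_iInf_of_measurable_uncurry
    ((hf.comp (measurable_fst.sub measurable_snd)).add (hg.comp measurable_snd))

theorem setOf_lt_add_setOf_lt_subset_setOf_infConvE_lt (f g : ES N → EReal) (s t : EReal) :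
    {x | f x < s} + {y | g y < t} ⊆ {x | infConvE f g x < s + t} := by
  rintro _ ⟨x, hx, y, hy, rfl⟩
  refine mem_ofPred.2 ((iInf_le _ y).trans_lt ?_)
  rw [add_sub_cancel_right]
  exact EReal.add_lt_add hx hy

theorem volume_setOf_lt_le_volume_setOf_infConvE_lt {t : EReal} (hg : ⨅ y, g y < t)
    (s : EReal) : volume {x | f x < s} ≤ volume {x | infConvE f g x < s + t} :=
  (measure_le_measure_add_of_nonempty volume _ (iInf_lt_iff.1 hg)).trans
    (measure_mono (setOf_lt_add_setOf_lt_subset_setOf_infConvE_lt f g s t))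

theorem luxNorm_eInv_le_two_mul_luxNorm_eInv_infConvE {φ : ℝ≥0∞ → ℝ≥0∞}
    (hφ : IsYoungFunction φ) (hf : Measurable f) (hg : Measurable g)
    (hgf : ⨅ y, g y ≤ ⨅ x, f x) :
    luxNorm φ (fun x => eInv (f x)) ≤ 2 * luxNorm φ (fun x => eInv (infConvE f g x)) := by
  simp only [eInv_eq_inv_toENNReal]
  refine luxNorm_inv_le_mul_of_volume_lt_le hφ two_ne_zero ENNReal.ofNat_ne_top
    hf.ereal_toENNReal.aemeasurable (aemeasurable_infConvE hf hg).ereal_toENNReal fun t => ?_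
  obtain rfl | ht := eq_or_ne t 0
  · simp
  have htt : t + t ≠ 0 := by simpa using ht
  simp only [two_mul, toENNReal_lt_iff_of_ne_zero ht, toENNReal_lt_iff_of_ne_zero htt,
    EReal.coe_ennreal_add]
  obtain hempty | ⟨x, hx⟩ := {x | f x < t}.eq_empty_or_nonempty
  · simp [hempty]
  · exact volume_setOf_lt_le_volume_setOf_infConvE_lt (hgf.trans_lt ((iInf_le f x).trans_lt hx)) t

end InfimalConvolution

theorem luxNorm_inv_add_le_four_luxNorm_inv_infConv {N : ℕ} (hN : 0 < N)
    (f g : ES N → EReal) (hf : Measurable f) (hg : Measurable g)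
    (hf' : ∀ x, f x ≠ ⊥) (hg' : ∀ x, g x ≠ ⊥)
    (a b : ℝ) (ha : (⨅ x, f x) = (a : EReal)) (hb : (⨅ x, g x) = (b : EReal))
    (hab : 0 ≤ a + b) :
    (∀ x, 0 ≤ f x - (((a - b) / 2 : ℝ) : EReal)) ∧
    (∀ x, 0 ≤ g x + (((a - b) / 2 : ℝ) : EReal)) ∧
    (∀ x, 0 ≤ infConvE f g x) ∧
    AEMeasurable (infConvE f g) (volume : Measure (ES N)) ∧
    ∀ φ : ℝ≥0∞ → ℝ≥0∞, IsYoungFunction φ →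
      luxNorm φ (fun x => eInv (f x - (((a - b) / 2 : ℝ) : EReal))) +
        luxNorm φ (fun x => eInv (g x + (((a - b) / 2 : ℝ) : EReal))) ≤
      4 * luxNorm φ (fun x => eInv (infConvE f g x)) := by
  set m : ℝ := (a - b) / 2 with hm
  have hF : ⨅ x, (f x - m) = (((a + b) / 2 : ℝ) : EReal) := by
    simp only [sub_eq_add_neg, ← EReal.coe_neg, iInf_add_coe, ha, ← EReal.coe_add]
    congr 1
    rw [hm]
    ring
  have hG : ⨅ x, (g x + m) = (((a + b) / 2 : ℝ) : EReal) := by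
    rw [iInf_add_coe, hb, ← EReal.coe_add, hm]
    ring_nf
  have hc : (0 : EReal) ≤ (((a + b) / 2 : ℝ) : EReal) :=
    EReal.coe_nonneg.2 (div_nonneg hab zero_le_two)
  have hF0 : ∀ x, 0 ≤ f x - m := le_iInf_iff.1 (hc.trans_eq hF.symm)
  have hG0 : ∀ x, 0 ≤ g x + m := le_iInf_iff.1 (hc.trans_eq hG.symm)
  have hconv := infConvE_sub_coe_add_coe f g m
  refine ⟨hF0, hG0, hconv ▸ infConvE_nonneg hF0 hG0, aemeasurable_infConvE hf hg, fun φ hφ => ?_⟩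
  have hfle := luxNorm_eInv_le_two_mul_luxNorm_eInv_infConvE hφ (hf.sub_const _)
    (hg.add_const _) (hG.trans hF.symm).le
  have hgle := luxNorm_eInv_le_two_mul_luxNorm_eInv_infConvE hφ (hg.add_const _)
    (hf.sub_const _) (hF.trans hG.symm).le
  rw [infConvE_comm, hconv] at hgle
  rw [hconv] at hfle
  exact (add_le_add hfle hgle).trans_eq (by rw [← add_mul]; norm_num)

end
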